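/- arXiv:0807.4692 — 5 statements merged into one kernel-verified Lean document; each statement's English description precedes it below -/
import Mathlib

section
/- The set C¹_0[0,a] of continuously differentiable functions on [0,a] vanishing at both endpoints is dense in E with respect to the norm ‖u‖ = (∫_0^a |u′|^p φ dt)^{1/p}; that is, for every u ∈ E and ε > 0 there exists v ∈ C¹[0,a] with v(0) = v(a) = 0 and ∫_0^a |u′ − v′|^p φ dt < ε. -/
open MeasureTheory Set

/-!
The derivative `u'` lies in `L^p(φ dt)`, a weighted space over a finite measure, so it is
approximated there by a bounded continuous `g` (`exists_continuous_approx`). The primitive of `g`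
vanishing at `0` need not vanish at `a`; the defect `G = ∫₀ᵃ g` is removed by subtracting
`k / (t + h)` from `g`, where `k = G / L` and `L = ∫₀ᵃ dt / (t + h) = log ((a + h) / h)`.

The correction is cheap because of the strong degeneracy of `φ` at `0`:
`(t + h)^(-p) φ(t) ≤ c₂ t^(δ - 1)`, which is integrable with a bound independent of `h`
(`correction_weight_le`), while `L → ∞`, hence `k → 0`, as `h → 0`.
-/

lemma add_rpow_le_two_rpow_mul {x y p : ℝ} (hx : 0 ≤ x) (hy : 0 ≤ y) (hp : 0 < p) :
    (x + y) ^ p ≤ 2 ^ p * (x ^ p + y ^ p) := by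
  have hm : 0 ≤ max x y := le_max_of_le_left hx
  have h1 : (x + y) ^ p ≤ (2 * max x y) ^ p :=
    Real.rpow_le_rpow (by positivity)
      (by linarith [le_max_left x y, le_max_right x y]) hp.le
  rw [Real.mul_rpow (by norm_num) hm] at h1
  refine h1.trans (mul_le_mul_of_nonneg_left ?_ (by positivity))
  have hxp := Real.rpow_nonneg hx p
  have hyp := Real.rpow_nonneg hy p
  rcases max_choice x y with h | h <;> rw [h] <;> linarith

/-- The weight is degenerate enough at `0` to absorb the `p`-th power of `1 / (t + h)`, up to an
integrable function that does not depend on `h`. -/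
lemma correction_weight_le {p δ c t h f : ℝ} (hp : 1 < p) (ht : 0 < t) (hh : 0 < h)
    (hf : 0 ≤ f) (hup : f ≤ c * t ^ (p - 1 + δ)) :
    (1 / (t + h)) ^ p * f ≤ c * t ^ (δ - 1) := by
  have h1 : (1 / (t + h)) ^ p ≤ (1 / t) ^ p :=
    Real.rpow_le_rpow (by positivity)
      (one_div_le_one_div_of_le ht (by linarith)) (by linarith)
  have h2 : (1 / t) ^ p = t ^ (-p) := by
    rw [one_div, Real.inv_rpow ht.le, Real.rpow_neg ht.le]
  calc (1 / (t + h)) ^ p * f ≤ t ^ (-p) * (c * t ^ (p - 1 + δ)) := by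
        rw [h2] at h1
        gcongr
    _ = c * (t ^ (-p) * t ^ (p - 1 + δ)) := by ring
    _ = c * t ^ (δ - 1) := by
        rw [← Real.rpow_add ht]
        congr 2
        ring

/-- Density of bounded continuous functions in the weighted space `L^p((0,a); φ dt)`. -/
lemma exists_continuous_approx {a p : ℝ} (hp : 1 < p) {φ w : ℝ → ℝ}
    (hφC0 : ContinuousOn φ (Icc 0 a)) (hφpos : ∀ t ∈ Ioc 0 a, 0 < φ t)
    (hwm : AEStronglyMeasurable w (volume.restrict (Ioo 0 a)))
    (hw : IntegrableOn (fun t => |w t| ^ p * φ t) (Ioo 0 a)) {η : ℝ} (hη : 0 < η) :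
    ∃ g : ℝ → ℝ, Continuous g ∧
      IntegrableOn (fun t => |w t - g t| ^ p * φ t) (Ioo 0 a) ∧
      ∫ t in Ioo 0 a, |w t - g t| ^ p * φ t ≤ η := by
  have hp0 : 0 < p := by linarith
  have hφi : IntegrableOn φ (Ioo 0 a) :=
    (hφC0.integrableOn_Icc).mono_set Ioo_subset_Icc_self
  have hpos : ∀ᵐ t ∂(volume.restrict (Ioo 0 a)), 0 < φ t :=
    (ae_restrict_mem measurableSet_Ioo).mono fun t ht => hφpos t ⟨ht.1, ht.2.le⟩
  set μ : Measure ℝ :=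
    (volume.restrict (Ioo 0 a)).withDensity (fun t => ENNReal.ofReal (φ t)) with hμ
  have hfin : IsFiniteMeasure μ := isFiniteMeasure_withDensity_ofReal hφi.2
  have hdm : AEMeasurable (fun t => ENNReal.ofReal (φ t)) (volume.restrict (Ioo 0 a)) :=
    hφi.aemeasurable.ennreal_ofReal
  have hlt : ∀ᵐ t ∂(volume.restrict (Ioo 0 a)), ENNReal.ofReal (φ t) < ⊤ :=
    Filter.Eventually.of_forall fun _ => ENNReal.ofReal_lt_top
  -- integration against `μ` is integration against `φ dt`
  have hcongr : ∀ f : ℝ → ℝ, (fun t => (ENNReal.ofReal (φ t)).toReal • (‖f t‖ ^ p))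
      =ᵐ[volume.restrict (Ioo 0 a)] fun t => |f t| ^ p * φ t := by
    intro f
    filter_upwards [hpos] with t ht
    rw [ENNReal.toReal_ofReal ht.le, smul_eq_mul, Real.norm_eq_abs, mul_comm]
  have hint : ∀ f : ℝ → ℝ, Integrable (fun t => ‖f t‖ ^ p) μ ↔
      IntegrableOn (fun t => |f t| ^ p * φ t) (Ioo 0 a) := by
    intro f
    rw [hμ, integrable_withDensity_iff_integrable_smul₀' hdm hlt, integrable_congr (hcongr f)]
    rfl
  have hval : ∀ f : ℝ → ℝ, ∫ t, ‖f t‖ ^ p ∂μ = ∫ t in Ioo 0 a, |f t| ^ p * φ t := by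
    intro f
    rw [hμ, integral_withDensity_eq_integral_toReal_smul₀ hdm hlt,
      integral_congr_ae (hcongr f)]
  have hp1 : ENNReal.ofReal p ≠ 0 := by simpa using hp0
  have hpr : (ENNReal.ofReal p).toReal = p := ENNReal.toReal_ofReal hp0.le
  have hwL : MemLp w (ENNReal.ofReal p) μ := by
    have hm : AEStronglyMeasurable w μ := hwm.mono_ac (withDensity_absolutelyContinuous _ _)
    rw [← integrable_norm_rpow_iff hm hp1 ENNReal.ofReal_ne_top, hpr]
    exact (hint w).2 hw
  obtain ⟨g, hg, hgL⟩ := hwL.exists_boundedContinuous_integral_rpow_sub_le hp0 hη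
  refine ⟨g, g.continuous, ?_, ?_⟩
  · have := (hwL.sub hgL).integrable_norm_rpow hp1 ENNReal.ofReal_ne_top
    rw [hpr] at this
    exact (hint (fun t => w t - g t)).1 this
  · rw [← hval (fun t => w t - g t)]
    exact hg

/-- **Density of `C¹_0[0,a]` in `E`** (Lemma `lem:approx`): for every
`u ∈ E = {u ∈ W^{1,p}(0,a;φ) : u(a) = 0}` and every `ε > 0` there is a `C¹`
function `v` on `[0,a]` with `v(0) = v(a) = 0` and
`∫_0^a |u' - v'|^p φ dt < ε`. -/
theorem C1_dense_in_E (a p : ℝ) (ha : 0 < a) (hp : 1 < p)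
    (φ φ' : ℝ → ℝ)
    (hφC0 : ContinuousOn φ (Icc 0 a))
    (hφC1 : ∀ t ∈ Ioc 0 a, HasDerivAt φ (φ' t) t)
    (hφ'C : ContinuousOn φ' (Ioc 0 a))
    (hφ0 : φ 0 = 0)
    (hφpos : ∀ t ∈ Ioc 0 a, 0 < φ t)
    (c₁ c₂ δ : ℝ) (hc₁ : 0 < c₁) (hc₂ : 0 < c₂) (hδ : 0 < δ)
    (hlow : ∀ t ∈ Icc 0 a, c₁ * t ^ (p - 1 + δ) ≤ φ t)
    (hup : ∀ t ∈ Icc 0 a, φ t ≤ c₂ * t ^ (p - 1 + δ))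
    -- `u ∈ E`:
    (u u' : ℝ → ℝ)
    (huloc : IntegrableOn u (Ioo 0 a))
    (hu : ∀ t ∈ Ioo 0 a, HasDerivAt u (u' t) t)
    (hu' : IntegrableOn (fun t => |u' t| ^ p * φ t) (Ioo 0 a))
    (hua : u a = 0)
    (ε : ℝ) (hε : 0 < ε) :
    ∃ v v' : ℝ → ℝ,
      ContinuousOn v (Icc 0 a) ∧
      ContinuousOn v' (Icc 0 a) ∧
      (∀ t ∈ Ioo 0 a, HasDerivAt v (v' t) t) ∧
      v 0 = 0 ∧ v a = 0 ∧
      ∫ t in Ioo 0 a, |u' t - v' t| ^ p * φ t < ε := by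
  have hp0 : 0 < p := by linarith
  have h2p : (0 : ℝ) < 2 ^ p := by positivity
  have hwm : AEStronglyMeasurable u' (volume.restrict (Ioo 0 a)) := by
    refine (measurable_deriv u).aestronglyMeasurable.congr ?_
    filter_upwards [ae_restrict_mem measurableSet_Ioo] with t ht
    exact (hu t ht).deriv
  obtain ⟨g, hgc, hgi, hgle⟩ := exists_continuous_approx hp hφC0 hφpos hwm hu'
    (η := ε / (2 * 2 ^ p)) (by positivity)
  set G : ℝ := ∫ s in (0 : ℝ)..a, g s with hG
  have hCi : IntegrableOn (fun t : ℝ => c₂ * t ^ (δ - 1)) (Ioo 0 a) :=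
    ((intervalIntegral.integrableOn_Ioo_rpow_iff ha).2 (by linarith)).const_mul c₂
  set C : ℝ := ∫ t in Ioo 0 a, c₂ * t ^ (δ - 1) with hC
  obtain ⟨L, hL0, hL⟩ : ∃ L : ℝ, 0 < L ∧ 2 ^ p * (|G / L| ^ p * C) < ε / 2 := by
    have h1 : Filter.Tendsto (fun L : ℝ => G / L) Filter.atTop (nhds 0) :=
      Filter.Tendsto.div_atTop tendsto_const_nhds Filter.tendsto_id
    have h2 : Filter.Tendsto (fun L : ℝ => 2 ^ p * (|G / L| ^ p * C)) Filter.atTop (nhds 0) := by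
      have h3 := ((h1.abs.rpow_const (p := p) (Or.inr hp0.le)).mul_const C).const_mul (2 ^ p)
      simpa [Real.zero_rpow hp0.ne'] using h3
    exact ((Filter.eventually_gt_atTop 0).and
      (h2.eventually_lt_const (by positivity : (0 : ℝ) < ε / 2))).exists
  have hexp : 0 < Real.exp L - 1 := by linarith [Real.add_one_lt_exp hL0.ne']
  -- `h` solves `log ((a + h) / h) = L`
  obtain ⟨h, hh, hhL⟩ : ∃ h : ℝ, 0 < h ∧ Real.log (a + h) - Real.log h = L := by
    refine ⟨a / (Real.exp L - 1), by positivity, ?_⟩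
    rw [← Real.log_div (by positivity) (by positivity)]
    have : (a + a / (Real.exp L - 1)) / (a / (Real.exp L - 1)) = Real.exp L := by
      field_simp
      ring
    rw [this, Real.log_exp]
  set k : ℝ := G / L with hk
  have hder : ∀ t : ℝ, 0 ≤ t → HasDerivAt
      (fun t => (∫ s in (0 : ℝ)..t, g s) - k * (Real.log (t + h) - Real.log h))
      (g t - k * (1 / (t + h))) t := by
    intro t ht
    have h1 : HasDerivAt (fun t => ∫ s in (0 : ℝ)..t, g s) (g t) t :=
      hgc.integral_hasStrictDerivAt 0 t |>.hasDerivAt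
    have h2 : HasDerivAt (fun t : ℝ => Real.log (t + h)) (1 / (t + h)) t :=
      ((hasDerivAt_id t).add_const h).log (by simp only [id]; positivity)
    exact h1.sub ((h2.sub_const (Real.log h)).const_mul k)
  refine ⟨fun t => (∫ s in (0 : ℝ)..t, g s) - k * (Real.log (t + h) - Real.log h),
    fun t => g t - k * (1 / (t + h)), ?_, ?_, fun t ht => hder t ht.1.le, ?_, ?_, ?_⟩
  · exact fun t ht => (hder t ht.1).continuousAt.continuousWithinAt
  · refine hgc.continuousOn.sub (continuousOn_const.mul (continuousOn_const.div (by fun_prop) ?_))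
    intro t ht
    have := ht.1
    positivity
  · simp
  · simp only [hhL, ← hG, hk]
    field_simp
    ring
  · have hbi : IntegrableOn
        (fun t => 2 ^ p * (|u' t - g t| ^ p * φ t + |k| ^ p * (c₂ * t ^ (δ - 1)))) (Ioo 0 a) :=
      (hgi.add (hCi.const_mul _)).const_mul _
    have hle : ∫ t in Ioo 0 a, |u' t - (g t - k * (1 / (t + h)))| ^ p * φ t ≤
        ∫ t in Ioo 0 a,
          2 ^ p * (|u' t - g t| ^ p * φ t + |k| ^ p * (c₂ * t ^ (δ - 1))) := by
      refine integral_mono_of_nonneg ?_ hbi ?_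
      · filter_upwards [ae_restrict_mem measurableSet_Ioo] with t ht
        have := hφpos t ⟨ht.1, ht.2.le⟩
        simp only [Pi.zero_apply]
        positivity
      · filter_upwards [ae_restrict_mem measurableSet_Ioo] with t ht
        have hφt := hφpos t ⟨ht.1, ht.2.le⟩
        have hth : 0 < t + h := add_pos ht.1 hh
        have h1 : |u' t - (g t - k * (1 / (t + h)))| ≤
            |u' t - g t| + |k| * (1 / (t + h)) := by
          calc |u' t - (g t - k * (1 / (t + h)))|
              = |(u' t - g t) + k * (1 / (t + h))| := by congr 1; ring
            _ ≤ |u' t - g t| + |k * (1 / (t + h))| := abs_add_le _ _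
            _ = _ := by rw [abs_mul, abs_of_pos (one_div_pos.2 hth)]
        have h2 := correction_weight_le hp ht.1 hh hφt.le (hup t ⟨ht.1.le, ht.2.le⟩)
        calc |u' t - (g t - k * (1 / (t + h)))| ^ p * φ t
            ≤ (2 ^ p * (|u' t - g t| ^ p + (|k| * (1 / (t + h))) ^ p)) * φ t := by
              gcongr
              exact (Real.rpow_le_rpow (abs_nonneg _) h1 hp0.le).trans
                (add_rpow_le_two_rpow_mul (abs_nonneg _) (by positivity) hp0)
          _ = 2 ^ p * (|u' t - g t| ^ p * φ t + |k| ^ p * ((1 / (t + h)) ^ p * φ t)) := by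
              rw [Real.mul_rpow (abs_nonneg _) (by positivity)]
              ring
          _ ≤ _ := by gcongr
    refine hle.trans_lt ?_
    rw [integral_const_mul, integral_add hgi (hCi.const_mul _), integral_const_mul, ← hC, mul_add]
    have h3 := mul_le_mul_of_nonneg_left hgle h2p.le
    have h4 : (2 : ℝ) ^ p * (ε / (2 * 2 ^ p)) = ε / 2 := by field_simp
    linarith
end

section
/- For all t ∈ (0,a) the function η_a satisfies the two-sided estimate (c₁/c₂)^{1/(p−1)} · (δ/(p−1)) · a^{δ/(p−1)} / ( t (a^{δ/(p−1)} − t^{δ/(p−1)}) ) ≤ η_a(t) ≤ (c₂/c₁)^{1/(p−1)} · (δ/(p−1)) · a^{δ/(p−1)} / ( t (a^{δ/(p−1)} − t^{δ/(p−1)}) ). -/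
/-!
Write `q = 1/(p-1)` and `s = δ/(p-1)`. Raising the two bounds on `φ` to the negative power `-q`
reverses them and gives `c₂^(-q) x^(-s-1) ≤ φ(x)^(-q) ≤ c₁^(-q) x^(-s-1)` (`rpow_neg_bounds`).
Using these bounds both at `t` and under the integral sign compares `η_a` with the same quotient for
the pure power `x^(-s-1)`, at the cost of a factor `(c₂/c₁)^q` either way. For the pure power,
`∫ σ in t..a, σ^(-s-1) = (t^(-s) - a^(-s)) / s` (`integral_rpow_neg_sub_one`), so the quotient is
exactly `s a^s / (t (a^s - t^s))`.
-/

open MeasureTheory Set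

/-- The weight `η_a(t) = φ(t)^{-1/(p-1)} / ∫_t^a φ(σ)^{-1/(p-1)} dσ`. -/
noncomputable def hardyEta (p a : ℝ) (φ : ℝ → ℝ) (t : ℝ) : ℝ :=
  φ t ^ (-(1 : ℝ) / (p - 1)) / ∫ σ in Ioo t a, φ σ ^ (-(1 : ℝ) / (p - 1))

/-- Here `y` plays the role of `φ x`; the exponent `-δ/(p-1) - 1` is `(p-1+δ) * (-1/(p-1))`. -/
lemma rpow_neg_bounds {p δ c₁ c₂ x y : ℝ} (hp : 1 < p) (hc₁ : 0 < c₁) (hc₂ : 0 < c₂)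
    (hx : 0 < x) (hy : 0 < y) (h₁ : c₁ * x ^ (p - 1 + δ) ≤ y) (h₂ : y ≤ c₂ * x ^ (p - 1 + δ)) :
    c₂ ^ (-(1 : ℝ) / (p - 1)) * x ^ (-(δ / (p - 1)) - 1) ≤ y ^ (-(1 : ℝ) / (p - 1)) ∧
      y ^ (-(1 : ℝ) / (p - 1)) ≤ c₁ ^ (-(1 : ℝ) / (p - 1)) * x ^ (-(δ / (p - 1)) - 1) := by
  have hp' : 0 < p - 1 := by linarith
  have hq : -(1 : ℝ) / (p - 1) ≤ 0 := div_nonpos_of_nonpos_of_nonneg (by norm_num) hp'.le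
  have hpow : 0 < x ^ (p - 1 + δ) := Real.rpow_pos_of_pos hx _
  have key : ∀ c : ℝ, 0 < c → (c * x ^ (p - 1 + δ)) ^ (-(1 : ℝ) / (p - 1)) =
      c ^ (-(1 : ℝ) / (p - 1)) * x ^ (-(δ / (p - 1)) - 1) := by
    intro c hc
    rw [Real.mul_rpow hc.le hpow.le, ← Real.rpow_mul hx.le]
    congr 2
    field_simp
    ring
  rw [← key c₁ hc₁, ← key c₂ hc₂]
  exact ⟨Real.rpow_le_rpow_of_nonpos hy h₂ hq,
    Real.rpow_le_rpow_of_nonpos (mul_pos hc₁ hpow) h₁ hq⟩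

lemma integral_rpow_neg_sub_one {s t a : ℝ} (hs : 0 < s) (ht : 0 < t) (hta : t < a) :
    ∫ σ in Ioo t a, σ ^ (-s - 1) = (t ^ (-s) - a ^ (-s)) / s := by
  have h0 : (0 : ℝ) ∉ uIcc t a := by
    rw [uIcc_of_le hta.le]
    exact fun h => absurd h.1 (not_le.mpr ht)
  rw [← integral_Ioc_eq_integral_Ioo, ← intervalIntegral.integral_of_le hta.le,
    integral_rpow (Or.inr ⟨by linarith, h0⟩), sub_add_cancel, div_neg, ← neg_div, neg_sub]

/-- **Two-sided estimate for `η_a`** (Lemma `lem:eta`): for all `t ∈ (0,a)`,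
`(c₁/c₂)^{1/(p-1)} (δ/(p-1)) a^{δ/(p-1)} / (t (a^{δ/(p-1)} - t^{δ/(p-1)}))
  ≤ η_a(t) ≤
 (c₂/c₁)^{1/(p-1)} (δ/(p-1)) a^{δ/(p-1)} / (t (a^{δ/(p-1)} - t^{δ/(p-1)}))`. -/
theorem hardyEta_two_sided_estimate (a p : ℝ) (ha : 0 < a) (hp : 1 < p)
    (φ φ' : ℝ → ℝ)
    (hφC0 : ContinuousOn φ (Icc 0 a))
    (hφC1 : ∀ t ∈ Ioc 0 a, HasDerivAt φ (φ' t) t)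
    (hφ'C : ContinuousOn φ' (Ioc 0 a))
    (hφ0 : φ 0 = 0)
    (hφpos : ∀ t ∈ Ioc 0 a, 0 < φ t)
    (c₁ c₂ δ : ℝ) (hc₁ : 0 < c₁) (hc₂ : 0 < c₂) (hδ : 0 < δ)
    (hlow : ∀ t ∈ Icc 0 a, c₁ * t ^ (p - 1 + δ) ≤ φ t)
    (hup : ∀ t ∈ Icc 0 a, φ t ≤ c₂ * t ^ (p - 1 + δ)) :
    ∀ t ∈ Ioo 0 a,
      (c₁ / c₂) ^ ((1 : ℝ) / (p - 1)) * (δ / (p - 1)) *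
          (a ^ (δ / (p - 1)) / (t * (a ^ (δ / (p - 1)) - t ^ (δ / (p - 1))))) ≤
        hardyEta p a φ t ∧
      hardyEta p a φ t ≤
        (c₂ / c₁) ^ ((1 : ℝ) / (p - 1)) * (δ / (p - 1)) *
          (a ^ (δ / (p - 1)) / (t * (a ^ (δ / (p - 1)) - t ^ (δ / (p - 1))))) := by
  intro t ht
  obtain ⟨ht0, hta⟩ := ht
  have hp' : 0 < p - 1 := by linarith
  have hbd : ∀ x ∈ Icc t a, _ := fun x hx =>
    have hx0 : 0 < x := ht0.trans_le hx.1
    rpow_neg_bounds hp hc₁ hc₂ hx0 (hφpos x ⟨hx0, hx.2⟩)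
      (hlow x ⟨hx0.le, hx.2⟩) (hup x ⟨hx0.le, hx.2⟩)
  obtain ⟨hl, hu⟩ := hbd t ⟨le_rfl, hta.le⟩
  have hIf : IntegrableOn (fun σ => φ σ ^ (-(1 : ℝ) / (p - 1))) (Ioo t a) := by
    refine (ContinuousOn.integrableOn_Icc ?_).mono_set Ioo_subset_Icc_self
    refine (hφC0.mono (Icc_subset_Icc_left ht0.le)).rpow_const fun x hx => Or.inl ?_
    exact (hφpos x ⟨ht0.trans_le hx.1, hx.2⟩).ne'
  have hIg : IntegrableOn (fun σ : ℝ => σ ^ (-(δ / (p - 1)) - 1)) (Ioo t a) := by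
    refine (ContinuousOn.integrableOn_Icc ?_).mono_set Ioo_subset_Icc_self
    exact continuousOn_id.rpow_const fun x hx => Or.inl (ht0.trans_le hx.1).ne'
  have hIl := setIntegral_mono_on (hIg.const_mul (c₂ ^ (-(1 : ℝ) / (p - 1)))) hIf
    measurableSet_Ioo fun x hx => (hbd x (Ioo_subset_Icc_self hx)).1
  have hIu := setIntegral_mono_on hIf (hIg.const_mul (c₁ ^ (-(1 : ℝ) / (p - 1))))
    measurableSet_Ioo fun x hx => (hbd x (Ioo_subset_Icc_self hx)).2
  have hs : 0 < δ / (p - 1) := div_pos hδ hp'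
  rw [integral_const_mul, integral_rpow_neg_sub_one hs ht0 hta] at hIl hIu
  unfold hardyEta
  generalize (∫ σ in Ioo t a, φ σ ^ (-(1 : ℝ) / (p - 1))) = J at *
  generalize φ t ^ (-(1 : ℝ) / (p - 1)) = y at *
  generalize δ / (p - 1) = s at *
  rw [neg_div] at *
  generalize 1 / (p - 1) = q at *
  have hA : 0 < a ^ s := Real.rpow_pos_of_pos ha _
  have hT : 0 < t ^ s := Real.rpow_pos_of_pos ht0 _
  have hTA : t ^ s < a ^ s := Real.rpow_lt_rpow ht0.le hta hs
  have hC₁ : 0 < c₁ ^ q := Real.rpow_pos_of_pos hc₁ _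
  have hC₂ : 0 < c₂ ^ q := Real.rpow_pos_of_pos hc₂ _
  rw [Real.rpow_sub_one ht0.ne'] at hl hu
  rw [Real.rpow_neg ht0.le] at hl hu
  rw [Real.rpow_neg ht0.le, Real.rpow_neg ha.le] at hIl hIu
  rw [Real.rpow_neg hc₂.le] at hl hIl
  rw [Real.rpow_neg hc₁.le] at hu hIu
  rw [Real.div_rpow hc₁.le hc₂.le, Real.div_rpow hc₂.le hc₁.le]
  generalize a ^ s = A at *
  generalize t ^ s = T at *
  generalize c₁ ^ q = C₁ at *
  generalize c₂ ^ q = C₂ at *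
  have hD : 0 < (T⁻¹ - A⁻¹) / s :=
    div_pos (sub_pos.mpr ((inv_lt_inv₀ hA hT).mpr hTA)) hs
  have hJ : 0 < J := (mul_pos (inv_pos.mpr hC₂) hD).trans_le hIl
  have hy : 0 < y := lt_of_lt_of_le (by positivity) hl
  have hAT : A - T ≠ 0 := (sub_pos.mpr hTA).ne'
  -- Both bounds are the quotient of the bounds on `y` and `J`, since
  -- `(T⁻¹ / t) / ((T⁻¹ - A⁻¹) / s) = s * (A / (t * (A - T)))`.
  have hquot : ∀ c d : ℝ, 0 < c → 0 < d →
      c / d * s * (A / (t * (A - T))) = d⁻¹ * (T⁻¹ / t) / (c⁻¹ * ((T⁻¹ - A⁻¹) / s)) := by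
    intro c d hc hd
    have hinv : T⁻¹ - A⁻¹ = (A - T) / (T * A) := by field_simp
    rw [hinv]
    field_simp
  rw [hquot C₁ C₂ hC₁ hC₂, hquot C₂ C₁ hC₂ hC₁]
  exact ⟨div_le_div₀ hy.le hl hJ hIu, div_le_div₀ (by positivity) hu (by positivity) hIl⟩
end

section
/- Suppose in addition that φ is twice differentiable on (0,a) and (log φ)″(t) < 0 for all t ∈ (0,a). Then there exists a unique T ∈ (0,a) such that η_a′(t) < 0 for all t ∈ (0,T) and η_a′(t) > 0 for all t ∈ (T,a); in particular T is the unique minimum point of η_a on (0,a). -/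
/-!
Write `w = φ^{-1/(p-1)}`, `q = 1/(p-1)`, `W(t) = ∫_t^a w` and `L = φ'/φ = (log φ)'`, so that
`η_a = w / W`, `W' = -w` and `w' = -q L w`. Then `η_a' = w D / W²` with `D = w - q L W`, and
`D' = -q L' W > 0` by the strict concavity of `log φ`; hence `D` is strictly increasing on `(0,a]`
and `η_a'` has the sign of `D`.

At the right end `D(a) = w(a) > 0`, because `W(a) = 0`. If `D` were nonnegative on all of `(0,a)`,
then `η_a` would be monotone, hence bounded near `0`; but the two power bounds on `φ` give
`η_a(t) ≥ c / t` (`weight_ratio_lower`). So `D` changes sign exactly once, at the required `T`.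
-/

open MeasureTheory Set

/-- A weight trapped between two multiples of `t ^ (-r)`, `r > 1`, has
`w(t) / ∫_t^a w ≥ c / t`: the power's own tail integral is at most `t ^ (1 - r) / (r - 1)`. -/
theorem weight_ratio_lower {a r A B : ℝ} {w : ℝ → ℝ} (hr : 1 < r) (hA : 0 < A) (hB : 0 < B)
    (hw : ContinuousOn w (Ioc 0 a))
    (hlow : ∀ t ∈ Ioc 0 a, A * t ^ (-r) ≤ w t) (hup : ∀ t ∈ Ioc 0 a, w t ≤ B * t ^ (-r))
    {t : ℝ} (ht : t ∈ Ioo 0 a) (hW : 0 < ∫ σ in t..a, w σ) :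
    A * (r - 1) / B / t ≤ w t / ∫ σ in t..a, w σ := by
  obtain ⟨ht0, hta⟩ := ht
  have ha : 0 < a := ht0.trans hta
  have hsub : Icc t a ⊆ Ioc 0 a := fun x hx => ⟨ht0.trans_le hx.1, hx.2⟩
  have h0 : (0 : ℝ) ∉ uIcc t a := by
    rw [uIcc_of_le hta.le]; exact fun h => absurd h.1 (not_le.2 ht0)
  have hWle : ∫ σ in t..a, w σ ≤ B * (t ^ (1 - r) / (r - 1)) := by
    calc ∫ σ in t..a, w σ ≤ ∫ σ in t..a, B * σ ^ (-r) := by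
          apply intervalIntegral.integral_mono_on hta.le
          · exact ContinuousOn.intervalIntegrable (by rw [uIcc_of_le hta.le]; exact hw.mono hsub)
          · exact (intervalIntegral.intervalIntegrable_rpow (Or.inr h0)).const_mul B
          · exact fun x hx => hup x (hsub hx)
      _ = B * ((t ^ (1 - r) - a ^ (1 - r)) / (r - 1)) := by
          rw [intervalIntegral.integral_const_mul,
            integral_rpow (Or.inr ⟨by linarith, h0⟩), show -r + 1 = 1 - r by ring,
            ← neg_div_neg_eq]
          congr 2 <;> ring
      _ ≤ _ := by
          have h1 := Real.rpow_pos_of_pos ha (1 - r)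
          have h2 : 0 < r - 1 := by linarith
          gcongr; linarith
  have hpow : t ^ (1 - r) = t * t ^ (-r) := by
    rw [show 1 - r = 1 + -r by ring, Real.rpow_add ht0, Real.rpow_one]
  have hr1 : 0 < r - 1 := by linarith
  rw [le_div_iff₀ hW]
  calc A * (r - 1) / B / t * ∫ σ in t..a, w σ
      ≤ A * (r - 1) / B / t * (B * (t ^ (1 - r) / (r - 1))) := by gcongr
    _ = A * t ^ (-r) := by rw [hpow]; field_simp
    _ ≤ w t := hlow t ⟨ht0, hta.le⟩

/-- **Unique critical point of `η_a`** (Lemma `phi_log_conc`): if moreover `φ`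
is twice differentiable on `(0,a)` with `(log φ)'' < 0` there, then there is a
unique `T ∈ (0,a)` such that `η_a' < 0` on `(0,T)` and `η_a' > 0` on `(T,a)`;
in particular `T` is the unique minimum point of `η_a` on `(0,a)`. -/
theorem hardyEta_unique_min (a p : ℝ) (ha : 0 < a) (hp : 1 < p)
    (φ φ' φ'' : ℝ → ℝ)
    (hφC0 : ContinuousOn φ (Icc 0 a))
    (hφC1 : ∀ t ∈ Ioc 0 a, HasDerivAt φ (φ' t) t)
    (hφ'C : ContinuousOn φ' (Ioc 0 a))
    (hφ0 : φ 0 = 0)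
    (hφpos : ∀ t ∈ Ioc 0 a, 0 < φ t)
    (c₁ c₂ δ : ℝ) (hc₁ : 0 < c₁) (hc₂ : 0 < c₂) (hδ : 0 < δ)
    (hlow : ∀ t ∈ Icc 0 a, c₁ * t ^ (p - 1 + δ) ≤ φ t)
    (hup : ∀ t ∈ Icc 0 a, φ t ≤ c₂ * t ^ (p - 1 + δ))
    -- `φ` is twice differentiable on `(0,a)` and `(log φ)'' < 0` there:
    (hφC2 : ∀ t ∈ Ioo 0 a, HasDerivAt φ' (φ'' t) t)
    (hlogconc : ∀ t ∈ Ioo 0 a,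
      HasDerivAt (fun s => deriv (fun r => Real.log (φ r)) s)
        ((φ'' t * φ t - φ' t ^ 2) / φ t ^ 2) t ∧
      (φ'' t * φ t - φ' t ^ 2) / φ t ^ 2 < 0) :
    ∃! T : ℝ, T ∈ Ioo 0 a ∧
      (∀ t ∈ Ioo 0 T, deriv (hardyEta p a φ) t < 0) ∧
      (∀ t ∈ Ioo T a, 0 < deriv (hardyEta p a φ) t) ∧
      (∀ t ∈ Ioo 0 a, t ≠ T → hardyEta p a φ T < hardyEta p a φ t) := by
  set q : ℝ := 1 / (p - 1) with hq
  have hp1 : 0 < p - 1 := by linarith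
  have hqpos : 0 < q := by positivity
  set w : ℝ → ℝ := fun t => φ t ^ (-(1 : ℝ) / (p - 1)) with hw
  set W : ℝ → ℝ := fun t => ∫ σ in t..a, w σ with hWdef
  have hexp : -(1 : ℝ) / (p - 1) = -q := by rw [hq]; ring
  have hη : ∀ t ∈ Ioo 0 a, hardyEta p a φ t = w t / W t := by
    intro t ht
    simp only [hardyEta, hWdef, hw]
    rw [intervalIntegral.integral_of_le ht.2.le, integral_Ioc_eq_integral_Ioo]
  have hwpos : ∀ t ∈ Ioc 0 a, 0 < w t := fun t ht => Real.rpow_pos_of_pos (hφpos t ht) _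
  have hwderiv : ∀ t ∈ Ioc 0 a, HasDerivAt w (-q * (φ' t / φ t) * w t) t := by
    intro t ht
    have h := (hφC1 t ht).rpow_const (p := -(1 : ℝ) / (p - 1)) (Or.inl (hφpos t ht).ne')
    convert h using 1
    simp only [hw]
    rw [Real.rpow_sub_one (hφpos t ht).ne', hexp]
    ring
  have hwcont : ContinuousOn w (Ioc 0 a) := fun t ht =>
    (hwderiv t ht).continuousAt.continuousWithinAt
  have hsub : ∀ t, 0 < t → Icc t a ⊆ Ioc 0 a := fun t ht x hx => ⟨ht.trans_le hx.1, hx.2⟩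
  have hint : ∀ t ∈ Ioo 0 a, IntervalIntegrable w volume t a := fun t ht =>
    ContinuousOn.intervalIntegrable (by
      rw [uIcc_of_le ht.2.le]; exact hwcont.mono (hsub t ht.1))
  have hWpos : ∀ t ∈ Ioo 0 a, 0 < W t := fun t ht =>
    intervalIntegral.intervalIntegral_pos_of_pos_on (hint t ht)
      (fun x hx => hwpos x ⟨ht.1.trans hx.1, hx.2.le⟩) ht.2
  have hWderiv : ∀ t ∈ Ioo 0 a, HasDerivAt W (-w t) t := by
    intro t ht
    apply intervalIntegral.integral_hasDerivAt_left (hint t ht)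
    · exact ContinuousOn.stronglyMeasurableAtFilter isOpen_Ioo
        (hwcont.mono Ioo_subset_Ioc_self) t ht
    · exact (hwderiv t ⟨ht.1, ht.2.le⟩).continuousAt
  have hWcont : ContinuousOn W (Ioc 0 a) := by
    intro t ht
    -- Near `t`, only the primitive on `[t/2, a]` matters.
    have ht2 : t / 2 ∈ Ioo 0 a := ⟨by linarith [ht.1], by linarith [ht.1, ht.2]⟩
    have h := intervalIntegral.continuousOn_primitive_interval_left (μ := volume) (f := w)
      (a := t / 2) (b := a) (by
        rw [uIcc_of_le ht2.2.le]
        exact (hwcont.mono (hsub _ ht2.1)).integrableOn_Icc)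
    rw [uIcc_of_le ht2.2.le] at h
    refine (h t ⟨by linarith [ht.1], ht.2⟩).mono_of_mem_nhdsWithin ?_
    filter_upwards [self_mem_nhdsWithin,
      mem_nhdsWithin_of_mem_nhds (Ioi_mem_nhds (show t / 2 < t by linarith [ht.1]))] with x h1 h2
    exact ⟨le_of_lt h2, h1.2⟩
  set D : ℝ → ℝ := fun t => w t - q * (φ' t / φ t) * W t with hD
  have hDcont : ContinuousOn D (Ioc 0 a) := by
    have hφc : ContinuousOn φ (Ioc 0 a) := hφC0.mono Ioc_subset_Icc_self
    exact hwcont.sub ((continuousOn_const.mul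
      (hφ'C.div hφc (fun t ht => (hφpos t ht).ne'))).mul hWcont)
  have hDderiv : ∀ t ∈ Ioo 0 a,
      HasDerivAt D (-q * ((φ'' t * φ t - φ' t ^ 2) / φ t ^ 2) * W t) t := by
    intro t ht
    have ht' : t ∈ Ioc 0 a := ⟨ht.1, ht.2.le⟩
    have h := (hwderiv t ht').sub
      ((((hφC2 t ht).div (hφC1 t ht') (hφpos t ht').ne').const_mul q).mul (hWderiv t ht))
    refine h.congr_deriv ?_
    simp only [Pi.div_apply]
    ring
  have hDmono : StrictMonoOn D (Ioc 0 a) := by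
    apply strictMonoOn_of_deriv_pos (convex_Ioc 0 a) hDcont
    intro t ht
    rw [interior_Ioc] at ht
    rw [(hDderiv t ht).deriv]
    exact mul_pos (mul_pos_of_neg_of_neg (neg_lt_zero.2 hqpos) (hlogconc t ht).2) (hWpos t ht)
  have hηderiv : ∀ t ∈ Ioo 0 a, HasDerivAt (hardyEta p a φ) (w t / W t ^ 2 * D t) t := by
    intro t ht
    have h := (hwderiv t ⟨ht.1, ht.2.le⟩).div (hWderiv t ht) (hWpos t ht).ne'
    have h2 := h.congr_of_eventuallyEq (f₁ := hardyEta p a φ)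
      (by filter_upwards [Ioo_mem_nhds ht.1 ht.2] with x hx using hη x hx)
    refine h2.congr_deriv ?_
    simp only [hD]
    ring
  have hcoef : ∀ t ∈ Ioo 0 a, 0 < w t / W t ^ 2 := fun t ht =>
    div_pos (hwpos t ⟨ht.1, ht.2.le⟩) (pow_pos (hWpos t ht) 2)
  have hηcont : ContinuousOn (hardyEta p a φ) (Ioo 0 a) := fun t ht =>
    (hηderiv t ht).continuousAt.continuousWithinAt
  have hDa : 0 < D a := by
    have : W a = 0 := intervalIntegral.integral_same
    simp only [hD, this, mul_zero, sub_zero]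
    exact hwpos a ⟨ha, le_rfl⟩
  -- The power bounds on `φ`, raised to the exponent `-q`, bound `w` by multiples of `t ^ (-r)`.
  set r : ℝ := 1 + δ * q with hr
  have hr1 : 1 < r := by have := mul_pos hδ hqpos; linarith
  have hpw : ∀ c : ℝ, 0 < c → ∀ t : ℝ, 0 < t → (c * t ^ (p - 1 + δ)) ^ (-q) = c ^ (-q) * t ^ (-r) := by
    intro c hc t ht
    rw [Real.mul_rpow hc.le (Real.rpow_nonneg ht.le _), ← Real.rpow_mul ht.le]
    congr 2
    rw [hr, hq]; field_simp
  have hwlow : ∀ t ∈ Ioc 0 a, c₂ ^ (-q) * t ^ (-r) ≤ w t := by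
    intro t ht
    rw [← hpw c₂ hc₂ t ht.1]
    simp only [hw, hexp]
    exact Real.rpow_le_rpow_of_nonpos (hφpos t ht) (hup t ⟨ht.1.le, ht.2⟩) (by linarith)
  have hwup : ∀ t ∈ Ioc 0 a, w t ≤ c₁ ^ (-q) * t ^ (-r) := by
    intro t ht
    rw [← hpw c₁ hc₁ t ht.1]
    simp only [hw, hexp]
    exact Real.rpow_le_rpow_of_nonpos (mul_pos hc₁ (Real.rpow_pos_of_pos ht.1 _))
      (hlow t ⟨ht.1.le, ht.2⟩) (by linarith)
  obtain ⟨t₀, ht₀, hDt₀⟩ : ∃ t ∈ Ioo 0 a, D t < 0 := by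
    by_contra! hcon
    have hmono : MonotoneOn (hardyEta p a φ) (Ioo 0 a) := by
      apply monotoneOn_of_deriv_nonneg (convex_Ioo 0 a) hηcont
      · rw [interior_Ioo]
        exact fun t ht => (hηderiv t ht).differentiableAt.differentiableWithinAt
      · rw [interior_Ioo]
        intro t ht
        rw [(hηderiv t ht).deriv]
        exact mul_nonneg (hcoef t ht).le (hcon t ht)
    set C : ℝ := c₂ ^ (-q) * (r - 1) / c₁ ^ (-q) with hC
    have hA := Real.rpow_pos_of_pos hc₂ (-q)
    have hB := Real.rpow_pos_of_pos hc₁ (-q)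
    have hCpos : 0 < C := div_pos (mul_pos hA (by linarith)) hB
    have hmid : a / 2 ∈ Ioo 0 a := ⟨by linarith, by linarith⟩
    set M := hardyEta p a φ (a / 2) with hM
    have hMpos : 0 < M := by
      rw [hM, hη _ hmid]; exact div_pos (hwpos _ ⟨hmid.1, hmid.2.le⟩) (hWpos _ hmid)
    -- A point `t ≤ a / 2` at which the lower bound `C / t` already exceeds `M = η_a(a/2)`.
    set t := min (a / 2) (C / (2 * M)) with htdef
    have ht0 : 0 < t := lt_min hmid.1 (by positivity)
    have ht1 : t ≤ a / 2 := min_le_left _ _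
    have ht2 : t ≤ C / (2 * M) := min_le_right _ _
    have ht : t ∈ Ioo 0 a := ⟨ht0, by linarith⟩
    have h1 := hmono ht hmid ht1
    rw [hη t ht] at h1
    have h2 := (weight_ratio_lower hr1 hA hB hwcont hwlow hwup ht (hWpos t ht)).trans h1
    change C / t ≤ M at h2
    rw [div_le_iff₀ ht0] at h2
    rw [le_div_iff₀ (by positivity)] at ht2
    linarith
  obtain ⟨T, hT, hDT⟩ : ∃ T ∈ Icc t₀ a, D T = 0 :=
    intermediate_value_Icc ht₀.2.le (hDcont.mono (hsub t₀ ht₀.1)) ⟨hDt₀.le, hDa.le⟩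
  have hTa : T ∈ Ioo 0 a := by
    refine ⟨ht₀.1.trans_le hT.1, lt_of_le_of_ne hT.2 ?_⟩
    rintro rfl
    exact hDa.ne' hDT
  have hTa' : T ∈ Ioc 0 a := ⟨hTa.1, hTa.2.le⟩
  have hneg : ∀ t ∈ Ioo 0 T, deriv (hardyEta p a φ) t < 0 := by
    intro t ht
    have hta : t ∈ Ioo 0 a := ⟨ht.1, ht.2.trans hTa.2⟩
    rw [(hηderiv t hta).deriv]
    exact mul_neg_of_pos_of_neg (hcoef t hta)
      (hDT ▸ hDmono ⟨hta.1, hta.2.le⟩ hTa' ht.2)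
  have hpos : ∀ t ∈ Ioo T a, 0 < deriv (hardyEta p a φ) t := by
    intro t ht
    have hta : t ∈ Ioo 0 a := ⟨hTa.1.trans ht.1, ht.2⟩
    rw [(hηderiv t hta).deriv]
    exact mul_pos (hcoef t hta) (hDT ▸ hDmono hTa' ⟨hta.1, hta.2.le⟩ ht.1)
  have hanti : StrictAntiOn (hardyEta p a φ) (Ioc 0 T) :=
    strictAntiOn_of_deriv_neg (convex_Ioc 0 T)
      (hηcont.mono fun x hx => ⟨hx.1, hx.2.trans_lt hTa.2⟩)
      (by rw [interior_Ioc]; exact hneg)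
  have hmono : StrictMonoOn (hardyEta p a φ) (Ico T a) :=
    strictMonoOn_of_deriv_pos (convex_Ico T a)
      (hηcont.mono fun x hx => ⟨hTa.1.trans_le hx.1, hx.2⟩)
      (by rw [interior_Ico]; exact hpos)
  have hmin : ∀ t ∈ Ioo 0 a, t ≠ T → hardyEta p a φ T < hardyEta p a φ t := by
    intro t ht hne
    rcases lt_or_gt_of_ne hne with h | h
    · exact hanti ⟨ht.1, h.le⟩ ⟨hTa.1, le_rfl⟩ h
    · exact hmono ⟨le_rfl, hTa.2⟩ ⟨h.le, ht.2⟩ h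
  refine ⟨T, ⟨hTa, hneg, hpos, hmin⟩, ?_⟩
  rintro S ⟨hSa, -, -, hS⟩
  by_contra hne
  exact lt_asymm (hmin S hSa hne) (hS T hTa (Ne.symm hne))
end

section
/- Let 1 < p < n, n ≥ 2, and a ∈ (0,π). Then lim_{t→0⁺} t · η̃_a(t) = (n−p)/(p−1); equivalently, lim_{t→0⁺} ((p−1)/(n−p)) t η̃_{aT}(t) = 1, where η̃_{aT} is the truncation of η̃_a at its unique minimum point. -/
/-!
Put `r = -(n-1)/(p-1) < -1` and `I(t) = ∫_t^a (sin s)^r ds`. Substituting `s = t u` gives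
`t^{-r-1} I(t) = ∫_{1 < u < a/t} (sin (t u) / t)^r du`. As `t → 0⁺` the integrand tends to `u^r`;
by concavity of `sin` on `[0, π]` it is dominated by `((sin a / a) u)^r`, which is integrable on
`(1, ∞)`. Dominated convergence yields `t^{-r-1} I(t) → ∫_1^∞ u^r du = -1/(r+1)`, and
`t η̃_a(t) = (sin t / t)^r / (t^{-r-1} I(t)) → -(r+1) = (n-p)/(p-1)`.
Near `0` the truncation does not change `η̃_a`, whence the second limit.
-/

open MeasureTheory Set Filter

/-- The weight `η̃_a(t) = (sin t)^{-(n-1)/(p-1)} / ∫_t^a (sin s)^{-(n-1)/(p-1)} ds`. -/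
noncomputable def etaTilde (n : ℕ) (p a : ℝ) (t : ℝ) : ℝ :=
  Real.sin t ^ (-((n : ℝ) - 1) / (p - 1)) /
    ∫ s in Ioo t a, Real.sin s ^ (-((n : ℝ) - 1) / (p - 1))

/-- The truncation `η̃_{aT}` of `η̃_a` at the point `T`. -/
noncomputable def etaTildeT (n : ℕ) (p a T : ℝ) (t : ℝ) : ℝ :=
  if t ≤ T then etaTilde n p a t else etaTilde n p a T

theorem tendsto_sin_mul_div (u : ℝ) :
    Tendsto (fun t : ℝ => Real.sin (t * u) / t) (nhdsWithin 0 (Ioi 0)) (nhds u) := by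
  have h : HasDerivAt (fun t : ℝ => Real.sin (t * u)) u 0 := by
    have h2 : HasDerivAt (fun t : ℝ => t * u) u 0 := by
      simpa using (hasDerivAt_id (0 : ℝ)).mul_const u
    simpa using h2.sin
  have h3 := h.tendsto_slope_zero_right
  refine h3.congr fun t => ?_
  simp [div_eq_inv_mul]

/-- The chord of the concave function `sin` over `[0, a]` lies below its graph. -/
theorem chord_le_sin {a x : ℝ} (ha : a ∈ Ioo 0 Real.pi) (hx0 : 0 ≤ x) (hxa : x ≤ a) :
    Real.sin a / a * x ≤ Real.sin x := by
  have hc := strictConcaveOn_sin_Icc.concaveOn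
  have ha0 : 0 < a := ha.1
  have hxa1 : 0 ≤ 1 - x / a := by rw [sub_nonneg, div_le_one ha0]; exact hxa
  have hxa0 : 0 ≤ x / a := by positivity
  have h := hc.2 (show (0 : ℝ) ∈ Icc 0 Real.pi from ⟨le_rfl, Real.pi_pos.le⟩)
    (show a ∈ Icc 0 Real.pi from ⟨ha0.le, ha.2.le⟩) hxa1 hxa0 (by ring)
  simp only [smul_eq_mul, Real.sin_zero, mul_zero, zero_add] at h
  rw [div_mul_cancel₀ _ ha0.ne'] at h
  calc Real.sin a / a * x = x / a * Real.sin a := by ring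
    _ ≤ _ := h

/-- The rescaled integral written as an integral over a domain free of `t`. -/
theorem rescaled_integral (r a : ℝ) {t : ℝ} (ht : 0 < t) :
    t ^ (-r - 1) * ∫ s in Ioo t a, Real.sin s ^ r =
      ∫ u, t ^ (-r) * (Ioo t a).indicator (fun s => Real.sin s ^ r) (t * u) := by
  rw [integral_const_mul,
    Measure.integral_comp_mul_left (fun s => (Ioo t a).indicator (fun s => Real.sin s ^ r) s) t,
    integral_indicator measurableSet_Ioo, abs_of_pos (inv_pos.2 ht), smul_eq_mul, ← mul_assoc,
    Real.rpow_sub_one ht.ne', div_eq_mul_inv]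

theorem tendsto_rescaled_integral {r a : ℝ} (hr : r < -1) (ha : a ∈ Ioo 0 Real.pi) :
    Tendsto (fun t : ℝ => t ^ (-r - 1) * ∫ s in Ioo t a, Real.sin s ^ r)
      (nhdsWithin 0 (Ioi 0)) (nhds (-1 / (r + 1))) := by
  have ha0 : 0 < a := ha.1
  have hsa : 0 < Real.sin a := Real.sin_pos_of_mem_Ioo ha
  have hlim : ∫ u, (Ioi (1 : ℝ)).indicator (fun u => u ^ r) u = -1 / (r + 1) := by
    rw [integral_indicator measurableSet_Ioi, integral_Ioi_rpow_of_lt hr one_pos, Real.one_rpow]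
  rw [← hlim]
  have key : Tendsto (fun t : ℝ => ∫ u, t ^ (-r) *
      (Ioo t a).indicator (fun s => Real.sin s ^ r) (t * u)) (nhdsWithin 0 (Ioi 0))
      (nhds (∫ u, (Ioi (1 : ℝ)).indicator (fun u => u ^ r) u)) := by
    refine tendsto_integral_filter_of_dominated_convergence
      ((Ioi (1 : ℝ)).indicator (fun u => (Real.sin a / a) ^ r * u ^ r)) ?_ ?_ ?_ ?_
    · refine Eventually.of_forall fun t => Measurable.aestronglyMeasurable ?_
      have h1 : Measurable ((Ioo t a).indicator (fun s => Real.sin s ^ r)) :=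
        (Real.measurable_sin.pow_const r).indicator measurableSet_Ioo
      exact (h1.comp (measurable_const_mul t)).const_mul _
    · filter_upwards [self_mem_nhdsWithin] with t (ht : 0 < t)
      refine Eventually.of_forall fun u => ?_
      by_cases hu : t * u ∈ Ioo t a
      · have hu1 : 1 < u := by
          have := hu.1
          by_contra! h
          nlinarith
        have hu0 : 0 < u := by linarith
        have hs : 0 < Real.sin (t * u) :=
          Real.sin_pos_of_mem_Ioo ⟨by positivity, hu.2.trans ha.2⟩
        rw [indicator_of_mem hu, indicator_of_mem (show u ∈ Ioi (1 : ℝ) from hu1),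
          Real.norm_of_nonneg (by positivity), ← Real.mul_rpow (by positivity) hu0.le,
          Real.rpow_neg ht.le, inv_mul_eq_div, ← Real.div_rpow hs.le ht.le]
        refine Real.rpow_le_rpow_of_nonpos (by positivity) ?_ (by linarith)
        rw [le_div_iff₀ ht]
        have := chord_le_sin ha (x := t * u) (by positivity) hu.2.le
        linarith
      · rw [indicator_of_notMem hu, mul_zero, norm_zero]
        refine indicator_nonneg (fun u hu => ?_) u
        have : (0 : ℝ) < u := one_pos.trans hu
        positivity
    · rw [integrable_indicator_iff measurableSet_Ioi]
      exact (integrableOn_Ioi_rpow_of_lt hr one_pos).const_mul _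
    · refine Eventually.of_forall fun u => ?_
      by_cases hu : 1 < u
      · have hu0 : 0 < u := by linarith
        rw [indicator_of_mem (show u ∈ Ioi (1 : ℝ) from hu)]
        have h1 := (tendsto_sin_mul_div u).rpow_const (p := r) (Or.inl hu0.ne')
        refine h1.congr' ?_
        have hsmall : ∀ᶠ t : ℝ in nhdsWithin 0 (Ioi 0), t < a / u :=
          mem_nhdsWithin_of_mem_nhds (Iio_mem_nhds (by positivity))
        filter_upwards [self_mem_nhdsWithin, hsmall] with t (ht : 0 < t) hta
        have hm : t * u ∈ Ioo t a :=
          ⟨by nlinarith, by rwa [lt_div_iff₀ hu0] at hta⟩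
        have hs : 0 < Real.sin (t * u) :=
          Real.sin_pos_of_mem_Ioo ⟨by positivity, hm.2.trans ha.2⟩
        rw [indicator_of_mem hm, Real.div_rpow hs.le ht.le, Real.rpow_neg ht.le, inv_mul_eq_div]
      · rw [indicator_of_notMem (show u ∉ Ioi (1 : ℝ) from hu)]
        refine tendsto_const_nhds.congr' ?_
        filter_upwards [self_mem_nhdsWithin] with t (ht : 0 < t)
        rw [indicator_of_notMem, mul_zero]
        rintro ⟨h, -⟩
        exact hu (by by_contra! h'; nlinarith)
  refine key.congr' ?_
  filter_upwards [self_mem_nhdsWithin] with t (ht : 0 < t)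
  exact (rescaled_integral r a ht).symm

/-- **Asymptotics of `η̃_a` at the origin** (equation `rho_asym`):
for `1 < p < n` and `a ∈ (0,π)`, `lim_{t→0⁺} t η̃_a(t) = (n-p)/(p-1)`;
equivalently, `lim_{t→0⁺} ((p-1)/(n-p)) t η̃_{aT}(t) = 1`, where `η̃_{aT}` is the
truncation of `η̃_a` at its (unique) minimum point `T`. -/
theorem etaTilde_asymptotics (n : ℕ) (hn : 2 ≤ n) (p : ℝ) (hp1 : 1 < p)
    (hpn : p < n) (a : ℝ) (ha : a ∈ Ioo 0 Real.pi) :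
    Tendsto (fun t => t * etaTilde n p a t) (nhdsWithin 0 (Ioi 0))
      (nhds (((n : ℝ) - p) / (p - 1))) ∧
    ∀ T ∈ Ioo 0 a, (∀ t ∈ Ioo 0 a, etaTilde n p a T ≤ etaTilde n p a t) →
      Tendsto (fun t => (p - 1) / ((n : ℝ) - p) * (t * etaTildeT n p a T t))
        (nhdsWithin 0 (Ioi 0)) (nhds 1) := by
  have hp : 0 < p - 1 := by linarith
  have hnp : 0 < (n : ℝ) - p := by linarith
  have hr1 : -((n : ℝ) - 1) / (p - 1) + 1 = -(((n : ℝ) - p) / (p - 1)) := by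
    field_simp
    ring
  have hL : 0 < ((n : ℝ) - p) / (p - 1) := by positivity
  have first : Tendsto (fun t => t * etaTilde n p a t) (nhdsWithin 0 (Ioi 0))
      (nhds (((n : ℝ) - p) / (p - 1))) := by
    unfold etaTilde
    set r : ℝ := -((n : ℝ) - 1) / (p - 1)
    set L : ℝ := ((n : ℝ) - p) / (p - 1)
    have hr : r < -1 := by linarith
    have h1 := (tendsto_sin_mul_div 1).rpow_const (p := r) (Or.inl one_ne_zero)
    have h2 := h1.div (tendsto_rescaled_integral hr ha)
      (div_ne_zero (by norm_num) (by linarith))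
    have e : (1 : ℝ) ^ r / (-1 / (r + 1)) = L := by
      rw [hr1, Real.one_rpow, neg_div_neg_eq, one_div_one_div]
    rw [e] at h2
    refine h2.congr' ?_
    have hsmall : ∀ᶠ t : ℝ in nhdsWithin 0 (Ioi 0), t < Real.pi :=
      mem_nhdsWithin_of_mem_nhds (Iio_mem_nhds Real.pi_pos)
    filter_upwards [self_mem_nhdsWithin, hsmall] with t (ht : 0 < t) htpi
    have hs : 0 < Real.sin t := Real.sin_pos_of_pos_of_lt_pi ht htpi
    have htr : 0 < t ^ r := Real.rpow_pos_of_pos ht r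
    simp only [Pi.div_apply, mul_one]
    rw [Real.div_rpow hs.le ht.le, Real.rpow_sub_one ht.ne', Real.rpow_neg ht.le,
      div_div, ← mul_assoc, mul_div_assoc', mul_inv_cancel₀ htr.ne', one_div, inv_mul_eq_div,
      div_div_eq_mul_div]
    ring
  refine ⟨first, fun T hT _ => ?_⟩
  have h := first.const_mul ((p - 1) / ((n : ℝ) - p))
  rw [div_mul_div_cancel₀ hnp.ne', div_self hp.ne'] at h
  refine h.congr' ?_
  have hsmall : ∀ᶠ t : ℝ in nhdsWithin 0 (Ioi 0), t < T :=
    mem_nhdsWithin_of_mem_nhds (Iio_mem_nhds hT.1)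
  filter_upwards [hsmall] with t ht
  rw [etaTildeT, if_pos ht.le]
end

section
/- Define A_k = (∫_{1/k}^a φ^{−1/(p−1)} dσ)^{p−1} · ∫_0^{1/k} φ(t)^{−1/(p−1)} / (∫_t^a φ^{−1/(p−1)} dσ)^p dt for k ∈ N with 1/k < a. Then lim_{k→∞} A_k = 1/(p−1). -/
/-!
Write `g = φ ^ (-1/(p-1))` and `F t = ∫_t^a g`. Then `F' = -g`, so `F ^ (1-p) / (p-1)` is an
antiderivative of `g / F ^ p` on `(0, a)`. The upper bound `φ ≤ c₂ t ^ (p-1+δ)` gives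
`g t ≥ K / t`, hence `F → ∞` at `0` and the antiderivative vanishes there. Therefore the second
factor of `A_k` is exactly `F (1/k) ^ (1-p) / (p-1)`, and `A_k = 1/(p-1)` as soon as `1/k < a`:
the sequence is eventually constant.
-/


open MeasureTheory Set Filter

/-- The quantity
`A_k = (∫_{1/k}^a φ^{-1/(p-1)})^{p-1} ∫_0^{1/k} φ(t)^{-1/(p-1)} / (∫_t^a φ^{-1/(p-1)})^p dt`. -/
noncomputable def hardyAk (p a : ℝ) (φ : ℝ → ℝ) (k : ℕ) : ℝ :=
  (∫ σ in Ioo (1 / (k : ℝ)) a, φ σ ^ (-(1 : ℝ) / (p - 1))) ^ (p - 1) *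
    ∫ t in Ioo 0 (1 / (k : ℝ)),
      φ t ^ (-(1 : ℝ) / (p - 1)) / (∫ σ in Ioo t a, φ σ ^ (-(1 : ℝ) / (p - 1))) ^ p

/-- A function bounded below by `K / x` near `0` has a divergent integral there. -/
lemma tendsto_integral_atTop_of_inv_le {g : ℝ → ℝ} {a K : ℝ} (ha : 0 < a) (hK : 0 < K)
    (hg : ContinuousOn g (Ioc 0 a)) (hlow : ∀ t ∈ Ioc 0 a, K * t⁻¹ ≤ g t) :
    Tendsto (fun t => ∫ x in t..a, g x) (nhdsWithin 0 (Ioi 0)) atTop := by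
  have hlog : Tendsto (fun t => K * (Real.log a - Real.log t)) (nhdsWithin 0 (Ioi 0)) atTop := by
    refine Tendsto.const_mul_atTop hK ?_
    simpa [sub_eq_add_neg] using tendsto_atTop_add_const_left _ (Real.log a)
      (tendsto_neg_atBot_atTop.comp Real.tendsto_log_nhdsGT_zero)
  refine tendsto_atTop_mono' _ ?_ hlog
  filter_upwards [Ioo_mem_nhdsGT ha] with t ht
  have hsub : Icc t a ⊆ Ioc 0 a := fun x hx => ⟨ht.1.trans_le hx.1, hx.2⟩
  have hne : (0 : ℝ) ∉ uIcc t a := by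
    rw [uIcc_of_le ht.2.le]
    exact fun h => absurd h.1 (not_le.mpr ht.1)
  calc K * (Real.log a - Real.log t) = ∫ x in t..a, K * x⁻¹ := by
        rw [intervalIntegral.integral_const_mul, integral_inv hne,
          Real.log_div ha.ne' ht.1.ne']
    _ ≤ ∫ x in t..a, g x := by
        refine intervalIntegral.integral_mono_on ht.2.le ?_ ?_ fun x hx => hlow x (hsub hx)
        · refine ContinuousOn.intervalIntegrable ?_
          exact continuousOn_const.mul (continuousOn_inv₀.mono fun x hx h0 => hne (h0 ▸ hx))
        · exact (hg.mono hsub).intervalIntegrable_of_Icc ht.2.le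

/-- The tail integral `F t = ∫_t^a g` turns `g / F ^ p` into an exact derivative; divergence of
`F` at `0` removes the boundary term there. -/
lemma integral_div_tail_rpow {g : ℝ → ℝ} {a p s : ℝ} (hp : 1 < p) (hs : s ∈ Ioo 0 a)
    (hg : ContinuousOn g (Ioc 0 a)) (hpos : ∀ t ∈ Ioc 0 a, 0 < g t)
    (hlim : Tendsto (fun t => ∫ x in t..a, g x) (nhdsWithin 0 (Ioi 0)) atTop) :
    ∫ t in (0 : ℝ)..s, g t / (∫ x in t..a, g x) ^ p =
      (∫ x in s..a, g x) ^ (1 - p) / (p - 1) := by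
  set F : ℝ → ℝ := fun t => ∫ x in t..a, g x with hF
  have hint : ∀ t ∈ Ioo 0 a, IntervalIntegrable g volume t a := fun t ht =>
    (hg.mono fun x hx => ⟨ht.1.trans_le hx.1, hx.2⟩).intervalIntegrable_of_Icc ht.2.le
  have hFpos : ∀ t ∈ Ioo 0 a, 0 < F t := fun t ht =>
    intervalIntegral.intervalIntegral_pos_of_pos_on (hint t ht)
      (fun x hx => hpos x ⟨ht.1.trans hx.1, hx.2.le⟩) ht.2
  have hgo : ContinuousOn g (Ioo 0 a) := hg.mono Ioo_subset_Ioc_self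
  have hFd : ∀ t ∈ Ioo 0 a, HasDerivAt F (-g t) t := fun t ht =>
    intervalIntegral.integral_hasDerivAt_left (hint t ht)
      (hgo.stronglyMeasurableAtFilter isOpen_Ioo t ht)
      (hgo.continuousAt (isOpen_Ioo.mem_nhds ht))
  have hp1 : p - 1 ≠ 0 := (sub_pos.mpr hp).ne'
  have hder : ∀ t ∈ Ioo 0 a,
      HasDerivAt (fun t => F t ^ (1 - p) / (p - 1)) (g t / F t ^ p) t := fun t ht => by
    have h := ((hFd t ht).rpow_const (p := 1 - p) (Or.inl (hFpos t ht).ne')).div_const (p - 1)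
    refine h.congr_deriv ?_
    rw [show 1 - p - 1 = -p by ring, Real.rpow_neg (hFpos t ht).le]
    have := (Real.rpow_pos_of_pos (hFpos t ht) p).ne'
    field_simp
    ring
  have hlim0 : Tendsto (fun t => F t ^ (1 - p) / (p - 1)) (nhdsWithin 0 (Ioi 0)) (nhds 0) := by
    have h := ((tendsto_rpow_neg_atTop (sub_pos.mpr hp)).comp hlim).div_const (p - 1)
    simpa [Function.comp_def, hF] using h
  -- The antiderivative, given its limit value `0` at the left endpoint.
  set G : ℝ → ℝ := Function.update (fun t => F t ^ (1 - p) / (p - 1)) 0 0 with hG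
  have hGd : ∀ t ∈ Ioo 0 a, HasDerivAt G (g t / F t ^ p) t := fun t ht =>
    (hder t ht).congr_of_eventuallyEq <| by
      filter_upwards [isOpen_ne.mem_nhds ht.1.ne'] with x hx
      exact Function.update_of_ne hx _ _
  have hGc : ContinuousOn G (Icc 0 s) := by
    intro t ht
    rcases ht.1.eq_or_lt with rfl | h0
    · rw [hG, continuousWithinAt_update_same]
      refine hlim0.mono_left (nhdsWithin_mono _ fun x hx => ?_)
      exact lt_of_le_of_ne hx.1.1 fun h => hx.2 h.symm
    · exact (hGd t ⟨h0, ht.2.trans_lt hs.2⟩).continuousAt.continuousWithinAt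
  have hd : ∀ t ∈ Ioo 0 s, HasDerivAt G (g t / F t ^ p) t := fun t ht =>
    hGd t ⟨ht.1, ht.2.trans hs.2⟩
  have hnn : ∀ t ∈ Ioo 0 s, 0 ≤ g t / F t ^ p := fun t ht =>
    div_nonneg (hpos t ⟨ht.1, (ht.2.trans hs.2).le⟩).le
      (Real.rpow_nonneg (hFpos t ⟨ht.1, ht.2.trans hs.2⟩).le _)
  have hI : IntervalIntegrable (fun t => g t / F t ^ p) volume 0 s :=
    (intervalIntegrable_iff_integrableOn_Ioc_of_le hs.1.le).mpr
      (intervalIntegral.integrableOn_deriv_of_nonneg hGc hd hnn)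
  rw [intervalIntegral.integral_eq_sub_of_hasDerivAt_of_le hs.1.le hGc hd hI]
  simp [hG, hF, hs.1.ne']

/-- **Limit of `A_k`** (equation `AkHopital`): `lim_{k→∞} A_k = 1/(p-1)`. -/
theorem hardyAk_tendsto (a p : ℝ) (ha : 0 < a) (hp : 1 < p)
    (φ φ' : ℝ → ℝ)
    (hφC0 : ContinuousOn φ (Icc 0 a))
    (hφC1 : ∀ t ∈ Ioc 0 a, HasDerivAt φ (φ' t) t)
    (hφ'C : ContinuousOn φ' (Ioc 0 a))
    (hφ0 : φ 0 = 0)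
    (hφpos : ∀ t ∈ Ioc 0 a, 0 < φ t)
    (c₁ c₂ δ : ℝ) (hc₁ : 0 < c₁) (hc₂ : 0 < c₂) (hδ : 0 < δ)
    (hlow : ∀ t ∈ Icc 0 a, c₁ * t ^ (p - 1 + δ) ≤ φ t)
    (hup : ∀ t ∈ Icc 0 a, φ t ≤ c₂ * t ^ (p - 1 + δ)) :
    Tendsto (hardyAk p a φ) atTop (nhds (1 / (p - 1))) := by
  have hp1 : 0 < p - 1 := sub_pos.mpr hp
  set g : ℝ → ℝ := fun t => φ t ^ (-(1 : ℝ) / (p - 1)) with hgdef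
  have hg : ContinuousOn g (Ioc 0 a) :=
    (hφC0.mono Ioc_subset_Icc_self).rpow_const fun t ht => Or.inl (hφpos t ht).ne'
  have hpos : ∀ t ∈ Ioc 0 a, 0 < g t := fun t ht => Real.rpow_pos_of_pos (hφpos t ht) _
  have haδ : 0 < c₂ * a ^ δ := mul_pos hc₂ (Real.rpow_pos_of_pos ha δ)
  -- On `(0, a]`, `φ t ≤ c₂ a ^ δ t ^ (p-1)`, which becomes `K / t ≤ g t`.
  have hgl : ∀ t ∈ Ioc 0 a, (c₂ * a ^ δ) ^ (-(1 : ℝ) / (p - 1)) * t⁻¹ ≤ g t := fun t ht => by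
    have h1 : φ t ≤ c₂ * a ^ δ * t ^ (p - 1) := by
      refine (hup t (Ioc_subset_Icc_self ht)).trans ?_
      rw [Real.rpow_add ht.1, mul_assoc, mul_comm (t ^ (p - 1))]
      have := Real.rpow_le_rpow ht.1.le ht.2 hδ.le
      have := (Real.rpow_pos_of_pos ht.1 (p - 1)).le
      gcongr
    have h2 := Real.rpow_le_rpow_of_nonpos (hφpos t ht) h1
      (div_nonpos_of_nonpos_of_nonneg (by norm_num : (-1 : ℝ) ≤ 0) hp1.le)
    rwa [Real.mul_rpow haδ.le (Real.rpow_nonneg ht.1.le _), ← Real.rpow_mul ht.1.le,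
      mul_div_cancel₀ _ hp1.ne', Real.rpow_neg_one] at h2
  have hlim := tendsto_integral_atTop_of_inv_le ha (Real.rpow_pos_of_pos haδ _) hg hgl
  have hIoo : ∀ t ≤ a, ∫ x in Ioo t a, g x = ∫ x in t..a, g x := fun t ht => by
    rw [intervalIntegral.integral_of_le ht, integral_Ioc_eq_integral_Ioo]
  refine tendsto_const_nhds.congr' ?_
  filter_upwards [tendsto_one_div_atTop_nhds_zero_nat.eventually_lt_const ha,
    eventually_gt_atTop 0] with k hk hk0
  have hs : 1 / (k : ℝ) ∈ Ioo 0 a := ⟨by positivity, hk⟩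
  have hsec : ∫ t in Ioo 0 (1 / (k : ℝ)), g t / (∫ x in Ioo t a, g x) ^ p =
      (∫ x in (1 / (k : ℝ))..a, g x) ^ (1 - p) / (p - 1) := by
    rw [← integral_div_tail_rpow hp hs hg hpos hlim, intervalIntegral.integral_of_le hs.1.le,
      integral_Ioc_eq_integral_Ioo]
    refine setIntegral_congr_fun measurableSet_Ioo fun t ht => ?_
    simp only [hIoo t (ht.2.trans hk).le]
  have hFpos : 0 < ∫ x in (1 / (k : ℝ))..a, g x :=
    intervalIntegral.intervalIntegral_pos_of_pos_on
      ((hg.mono fun x hx => ⟨hs.1.trans_le hx.1, hx.2⟩).intervalIntegrable_of_Icc hk.le)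
      (fun x hx => hpos x ⟨hs.1.trans hx.1, hx.2.le⟩) hk
  change _ = (∫ x in Ioo (1 / (k : ℝ)) a, g x) ^ (p - 1) *
    ∫ t in Ioo 0 (1 / (k : ℝ)), g t / (∫ x in Ioo t a, g x) ^ p
  rw [hsec, hIoo _ hk.le, ← mul_div_assoc, ← Real.rpow_add hFpos]
  simp
end
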